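/- For each $i$ with $1 \le i \le n$, the weight space $A_{\chi_i}$ (where $\chi_i \in \mathbb{Z}^n$ is the $i$-th standard basis vector) is an $A_0$-submodule of $A$, and it is generated as an $A_0$-module by the two elements $\sigma_i = x_0x_1\cdots x_{i-1}$ and $\tau_i = y_iy_{i+1}\cdots y_n$; that is, $A_{\chi_i} = A_0\,\sigma_i + A_0\,\tau_i$. -/

import Mathlib

open MvPolynomial

noncomputable section

/-- The variables of `A = k[x₀,…,xₙ,y₀,…,yₙ]`: `Sum.inl i` is `xᵢ`, `Sum.inr i` is `yᵢ`. -/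
abbrev Vars (n : ℕ) : Type := Fin (n + 1) ⊕ Fin (n + 1)

/-- The `l`-th weight of a monomial `∏ xᵢ^{cᵢ} yᵢ^{dᵢ}`, for `l ∈ {1,…,n}` encoded as
`l : Fin n` (representing the index `l+1`): it is `c_{l-1} - c_l - d_{l-1} + d_l`. -/
def wt (n : ℕ) (σ : Vars n →₀ ℕ) (l : Fin n) : ℤ :=
  (σ (Sum.inl l.castSucc) : ℤ) - (σ (Sum.inl l.succ) : ℤ)
    - (σ (Sum.inr l.castSucc) : ℤ) + (σ (Sum.inr l.succ) : ℤ)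

/-- The weight space `A_χ`. -/
def wtSpace (k : Type) [Field k] (n : ℕ) (χ : Fin n → ℤ) : Set (MvPolynomial (Vars n) k) :=
  {p | ∀ σ ∈ p.support, ∀ l : Fin n, wt n σ l = χ l}

/-- The standard basis vector `χ_{i+1} ∈ ℤⁿ`, for `i : Fin n` representing the paper's
index `i+1 ∈ {1,…,n}`. -/
def chi (n : ℕ) (i : Fin n) : Fin n → ℤ := fun l => if l = i then 1 else 0

/-- `σ_{i+1} = x₀x₁⋯xᵢ` (the paper's `σ_m = x₀⋯x_{m-1}` for `m = i+1`). -/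
def sigmaElt (k : Type) [Field k] (n : ℕ) (i : Fin n) : MvPolynomial (Vars n) k :=
  ∏ j ∈ Finset.univ.filter (fun j : Fin (n + 1) => (j : ℕ) < (i : ℕ) + 1), X (Sum.inl j)

/-- `τ_{i+1} = y_{i+1}⋯yₙ` (the paper's `τ_m = y_m⋯yₙ` for `m = i+1`). -/
def tauElt (k : Type) [Field k] (n : ℕ) (i : Fin n) : MvPolynomial (Vars n) k :=
  ∏ j ∈ Finset.univ.filter (fun j : Fin (n + 1) => (i : ℕ) + 1 ≤ (j : ℕ)), X (Sum.inr j)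

lemma wt_add' (n : ℕ) (a b : Vars n →₀ ℕ) (l : Fin n) :
    wt n (a + b) l = wt n a l + wt n b l := by
  simp only [wt, Finsupp.add_apply]; push_cast; ring

lemma wtSpace_mul (k : Type) [Field k] (n : ℕ) (χ ψ : Fin n → ℤ)
    (p q : MvPolynomial (Vars n) k) (hp : p ∈ wtSpace k n χ) (hq : q ∈ wtSpace k n ψ) :
    p * q ∈ wtSpace k n (χ + ψ) := by
  classical
  intro s hs l
  obtain ⟨a, ha, b, hb, rfl⟩ := Finset.mem_add.1 (MvPolynomial.support_mul p q hs)
  rw [wt_add', hp a ha l, hq b hb l]; rfl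

lemma wtSpace_add (k : Type) [Field k] (n : ℕ) (χ : Fin n → ℤ)
    (p q : MvPolynomial (Vars n) k) (hp : p ∈ wtSpace k n χ) (hq : q ∈ wtSpace k n χ) :
    p + q ∈ wtSpace k n χ := by
  classical
  intro s hs l
  rcases Finset.mem_union.1 (MvPolynomial.support_add hs) with h | h
  · exact hp s h l
  · exact hq s h l

lemma wtSpace_zero (k : Type) [Field k] (n : ℕ) (χ : Fin n → ℤ) :
    (0 : MvPolynomial (Vars n) k) ∈ wtSpace k n χ := by
  intro s hs; simp at hs

lemma wtSpace_monomial (k : Type) [Field k] (n : ℕ) (χ : Fin n → ℤ) (s : Vars n →₀ ℕ) (c : k)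
    (h : ∀ l, wt n s l = χ l) : monomial s c ∈ wtSpace k n χ := by
  classical
  intro t ht l
  have := MvPolynomial.support_monomial_subset ht
  rw [Finset.mem_singleton.1 this]; exact h l

/-- Exponent vector of `sigmaElt`. -/
def sExp (n : ℕ) (i : Fin n) : Vars n →₀ ℕ :=
  Finsupp.equivFunOnFinite.symm
    (Sum.elim (fun j => if (j : ℕ) < (i : ℕ) + 1 then 1 else 0) (fun _ => 0))

/-- Exponent vector of `tauElt`. -/
def tExp (n : ℕ) (i : Fin n) : Vars n →₀ ℕ :=
  Finsupp.equivFunOnFinite.symm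
    (Sum.elim (fun _ => 0) (fun j => if (i : ℕ) + 1 ≤ (j : ℕ) then 1 else 0))

lemma sigmaElt_eq (k : Type) [Field k] (n : ℕ) (i : Fin n) :
    sigmaElt k n i = monomial (sExp n i) 1 := by
  rw [MvPolynomial.monomial_eq, Finsupp.prod_fintype _ _ (by simp)]
  simp [sigmaElt, sExp, Fintype.prod_sum_type, Finset.prod_filter, pow_ite]

lemma tauElt_eq (k : Type) [Field k] (n : ℕ) (i : Fin n) :
    tauElt k n i = monomial (tExp n i) 1 := by
  rw [MvPolynomial.monomial_eq, Finsupp.prod_fintype _ _ (by simp)]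
  simp [tauElt, tExp, Fintype.prod_sum_type, Finset.prod_filter, pow_ite]

lemma wt_sExp (n : ℕ) (i l : Fin n) : wt n (sExp n i) l = chi n i l := by
  simp only [wt, sExp, chi, Fin.ext_iff, Finsupp.equivFunOnFinite_symm_apply_apply, Sum.elim_inl,
    Sum.elim_inr, Fin.val_castSucc, Fin.val_succ]
  split_ifs <;> simp <;> omega

lemma wt_tExp (n : ℕ) (i l : Fin n) : wt n (tExp n i) l = chi n i l := by
  simp only [wt, tExp, chi, Fin.ext_iff, Finsupp.equivFunOnFinite_symm_apply_apply, Sum.elim_inl,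
    Sum.elim_inr, Fin.val_castSucc, Fin.val_succ]
  split_ifs <;> simp <;> omega

lemma diff_eq (n : ℕ) (i : Fin n) (s : Vars n →₀ ℕ) (h : ∀ l, wt n s l = chi n i l)
    (j : Fin (n + 1)) :
    (s (Sum.inl j) : ℤ) - s (Sum.inr j) =
      (s (Sum.inl 0) : ℤ) - s (Sum.inr 0) - (if (j : ℕ) < (i : ℕ) + 1 then 0 else 1) := by
  induction j using Fin.induction with
  | zero => simp
  | succ l ih =>
    have := h l
    simp only [wt, chi, Fin.ext_iff] at this
    simp only [Fin.val_castSucc, Fin.val_succ] at ih ⊢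
    split_ifs at * <;> omega

lemma exp_le (n : ℕ) (i : Fin n) (s : Vars n →₀ ℕ) (h : ∀ l, wt n s l = chi n i l) :
    sExp n i ≤ s ∨ tExp n i ≤ s := by
  have hd := diff_eq n i s h
  by_cases h0 : (1 : ℤ) ≤ (s (Sum.inl 0) : ℤ) - s (Sum.inr 0)
  · left
    rintro (j | j)
    · have := hd j
      simp only [sExp, Finsupp.equivFunOnFinite_symm_apply_apply, Sum.elim_inl]
      split_ifs at * <;> omega
    · simp [sExp]
  · right
    rintro (j | j)
    · simp [tExp]
    · have := hd j
      simp only [tExp, Finsupp.equivFunOnFinite_symm_apply_apply, Sum.elim_inr]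
      split_ifs at * <;> omega

lemma mono_split (k : Type) [Field k] (n : ℕ) (χ : Fin n → ℤ) (s e : Vars n →₀ ℕ) (c : k)
    (h : ∀ l, wt n s l = χ l) (he : ∀ l, wt n e l = χ l) (hle : e ≤ s) :
    ∃ p ∈ wtSpace k n 0, monomial s c = p * monomial e 1 := by
  refine ⟨monomial (s - e) c, wtSpace_monomial _ _ _ _ _ fun l => ?_, ?_⟩
  · have := wt_add' n (s - e) e l
    rw [tsub_add_cancel_of_le hle, h, he] at this
    simp; omega
  · rw [monomial_mul, tsub_add_cancel_of_le hle, mul_one]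

/-- For each `i ∈ {1,…,n}` (encoded as `i : Fin n` representing `i+1`), the weight space
`A_{χ_i}` is an `A₀`-submodule of `A`, generated as an `A₀`-module by `σ_i` and `τ_i`:
`A_{χ_i} = A₀·σ_i + A₀·τ_i`. -/
theorem stmt3 (k : Type) [Field k] (n : ℕ) (hn : 1 ≤ n) (i : Fin n) :
    (∀ p ∈ wtSpace k n 0, ∀ q ∈ wtSpace k n (chi n i), p * q ∈ wtSpace k n (chi n i)) ∧
    (∀ q : MvPolynomial (Vars n) k,
      q ∈ wtSpace k n (chi n i) ↔
        ∃ p₁ ∈ wtSpace k n 0, ∃ p₂ ∈ wtSpace k n 0,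
          q = p₁ * sigmaElt k n i + p₂ * tauElt k n i) := by
  refine ⟨fun p hp q hq => ?_, fun q => ⟨fun hq => ?_, ?_⟩⟩
  · simpa using wtSpace_mul k n 0 _ p q hp hq
  · rw [sigmaElt_eq, tauElt_eq, ← MvPolynomial.support_sum_monomial_coeff q]
    refine Finset.sum_induction _ (fun q => ∃ p₁ ∈ wtSpace k n 0, ∃ p₂ ∈ wtSpace k n 0,
          q = p₁ * monomial (sExp n i) 1 + p₂ * monomial (tExp n i) 1) ?_ ?_ ?_
    · rintro _ _ ⟨a, ha, b, hb, rfl⟩ ⟨c, hc, d, hd, rfl⟩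
      exact ⟨a + c, wtSpace_add _ _ _ _ _ ha hc, b + d, wtSpace_add _ _ _ _ _ hb hd, by ring⟩
    · exact ⟨0, wtSpace_zero _ _ _, 0, wtSpace_zero _ _ _, by simp⟩
    · intro s hs
      rcases exp_le n i s (hq s hs) with h | h
      · obtain ⟨p, hp, e⟩ := mono_split k n _ s _ (coeff s q) (hq s hs) (wt_sExp n i) h
        exact ⟨p, hp, 0, wtSpace_zero _ _ _, by rw [e]; simp⟩
      · obtain ⟨p, hp, e⟩ := mono_split k n _ s _ (coeff s q) (hq s hs) (wt_tExp n i) h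
        exact ⟨0, wtSpace_zero _ _ _, p, hp, by rw [e]; simp⟩
  · rintro ⟨a, ha, b, hb, rfl⟩
    rw [sigmaElt_eq, tauElt_eq]
    apply wtSpace_add
    · simpa using wtSpace_mul k n 0 _ _ _ ha (wtSpace_monomial k n _ _ 1 (wt_sExp n i))
    · simpa using wtSpace_mul k n 0 _ _ _ hb (wtSpace_monomial k n _ _ 1 (wt_tExp n i))
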